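/- Let E be a finite-dimensional complex inner product space, M a natural number, and (A_m)_{m∈ℤ} a family of linear operators on E with A_m = 0 whenever |m| > M. For integers p ≤ q, let 𝒯 be the block-Toeplitz operator on the Hilbert space of functions Φ : {p, p+1, …, q} → E with the ℓ² inner product, defined by (𝒯Φ)(l) = ∑_{l'=p}^{q} A_{l−l'} Φ(l'). Then the operator norm of 𝒯 satisfies ‖𝒯‖ ≤ sup_{θ ∈ [0, 2π]} ‖∑_{m∈ℤ} A_m e^{i m θ}‖, where the norm on the right is the operator norm on E. -/

import Mathlib

noncomputable section

variable {E : Type*} [NormedAddCommGroup E] [InnerProductSpace ℂ E] [FiniteDimensional ℂ E]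

/-- `δ_i v`: the function equal to `v` at `i` and `0` elsewhere, as a continuous linear map. -/
def inclCLM {ι : Type*} [Fintype ι] [DecidableEq ι] (i : ι) :
    E →L[ℂ] PiLp 2 (fun _ : ι => E) :=
  LinearMap.toContinuousLinearMap
    (((WithLp.linearEquiv 2 ℂ (∀ _ : ι, E)).symm.toLinearMap).comp
      (LinearMap.single ℂ (fun _ : ι => E) i))

/-- Evaluation at index `i`, as a continuous linear map. -/
def projCLM {ι : Type*} [Fintype ι] [DecidableEq ι] (i : ι) :
    PiLp 2 (fun _ : ι => E) →L[ℂ] E :=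
  PiLp.proj 2 (fun _ : ι => E) i

/-- The operator on the `ℓ²` space of functions `ι → E` with operator-valued matrix
entries `A i j`, i.e. `(matOp A Φ)(i) = ∑ j, A i j (Φ j)`. -/
def matOp {ι : Type*} [Fintype ι] [DecidableEq ι] (A : ι → ι → (E →L[ℂ] E)) :
    PiLp 2 (fun _ : ι => E) →L[ℂ] PiLp 2 (fun _ : ι => E) :=
  ∑ i : ι, ∑ j : ι, (inclCLM i).comp ((A i j).comp (projCLM j))

theorem geom_aux (N : ℕ) (hN : 0 < N) (d : ℤ) (hd : d ≠ 0) (hdN : |d| < N) :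
    ∑ k ∈ Finset.range N, Complex.exp (Complex.I * (d : ℂ) * ((2 * Real.pi * k / N : ℝ) : ℂ)) = 0 := by
  have hN' : (N : ℂ) ≠ 0 := by exact_mod_cast hN.ne'
  have hprim := Complex.isPrimitiveRoot_exp N hN.ne'
  set ζ := Complex.exp (2 * Real.pi * Complex.I / N) with hζ
  have h1 : ∀ k ∈ Finset.range N,
      Complex.exp (Complex.I * (d : ℂ) * ((2 * Real.pi * k / N : ℝ) : ℂ)) = (ζ ^ d) ^ k := by
    intro k _
    rw [hζ, ← Complex.exp_int_mul, ← Complex.exp_nat_mul]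
    congr 1
    push_cast
    ring
  rw [Finset.sum_congr rfl h1]
  have h2 : ζ ^ d ≠ 1 := by
    intro h
    rw [hprim.zpow_eq_one_iff_dvd] at h
    exact hd (Int.eq_zero_of_abs_lt_dvd h hdN)
  rw [geom_sum_eq h2]
  have h3 : (ζ ^ d) ^ N = 1 := by
    rw [← zpow_natCast, ← zpow_mul, mul_comm, zpow_mul, zpow_natCast, hprim.pow_eq_one, one_zpow]
  rw [h3]; simp

theorem parseval_aux {F : Type*} [NormedAddCommGroup F] [InnerProductSpace ℂ F]
    (N : ℕ) (hN : 0 < N) (S : Finset ℤ)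
    (hS : ∀ m ∈ S, ∀ n ∈ S, |m - n| < N) (v : ℤ → F) :
    ∑ k ∈ Finset.range N,
      ‖∑ n ∈ S, Complex.exp (Complex.I * (n : ℂ) * ((2 * Real.pi * k / N : ℝ) : ℂ)) • v n‖ ^ 2
      = N * ∑ n ∈ S, ‖v n‖ ^ 2 := by
  have key : ∀ k ∈ Finset.range N,
      ((‖∑ n ∈ S, Complex.exp (Complex.I * (n : ℂ) * ((2 * Real.pi * k / N : ℝ) : ℂ)) • v n‖ ^ 2 : ℝ) : ℂ)
      = ∑ m ∈ S, ∑ n ∈ S,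
        Complex.exp (Complex.I * ((n - m : ℤ) : ℂ) * ((2 * Real.pi * k / N : ℝ) : ℂ)) * inner ℂ (v m) (v n) := by
    intro k _
    generalize (2 * Real.pi * k / N : ℝ) = t
    have := inner_self_eq_norm_sq_to_K (𝕜 := ℂ)
      (∑ n ∈ S, Complex.exp (Complex.I * (n : ℂ) * (t : ℂ)) • v n)
    rw [Complex.ofReal_pow]
    refine this.symm.trans ?_
    rw [sum_inner]
    refine Finset.sum_congr rfl fun m _ => ?_
    rw [inner_sum]
    refine Finset.sum_congr rfl fun n _ => ?_
    rw [inner_smul_left, inner_smul_right, ← mul_assoc, ← Complex.exp_conj, ← Complex.exp_add]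
    congr 2
    simp
    ring
  apply Complex.ofReal_injective
  rw [Complex.ofReal_sum, Finset.sum_congr rfl key, Finset.sum_comm]
  push_cast
  rw [Finset.mul_sum]
  refine Finset.sum_congr rfl fun m hm => ?_
  rw [Finset.sum_comm, Finset.sum_eq_single m]
  · have := inner_self_eq_norm_sq_to_K (𝕜 := ℂ) (v m)
    simp [this]
  · intro n hn hne
    rw [← Finset.sum_mul]
    have := geom_aux N hN (n - m) (sub_ne_zero.2 hne) (hS n hn m hm)
    push_cast at this
    rw [this, zero_mul]
  · intro h; exact absurd hm h

theorem matOp_apply_aux {ι : Type*} [Fintype ι] [DecidableEq ι] (A : ι → ι → (E →L[ℂ] E))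
    (Φ : PiLp 2 (fun _ : ι => E)) (i : ι) : matOp A Φ i = ∑ j, A i j (Φ j) := by
  simp [matOp, inclCLM, projCLM, Pi.single_apply]

theorem conv_aux (M : ℕ) (A : ℤ → E →L[ℂ] E)
    (hA : ∀ m : ℤ, (M : ℤ) < |m| → A m = 0) (p q : ℤ) (φ : ℤ → E) (t : ℂ) :
    (∑ m ∈ Finset.Icc (-(M : ℤ)) (M : ℤ), Complex.exp (Complex.I * (m : ℂ) * t) • A m)
      (∑ l ∈ Finset.Icc p q, Complex.exp (Complex.I * (l : ℂ) * t) • φ l)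
    = ∑ n ∈ Finset.Icc (p - M) (q + M), Complex.exp (Complex.I * (n : ℂ) * t) •
        ∑ l ∈ Finset.Icc p q, A (n - l) (φ l) := by
  simp_rw [Finset.smul_sum]
  rw [map_sum, Finset.sum_comm]
  refine Finset.sum_congr rfl fun l hl => ?_
  rw [Finset.mem_Icc] at hl
  have h1 : ∑ n ∈ Finset.Icc (p - M) (q + M), Complex.exp (Complex.I * (n : ℂ) * t) • A (n - l) (φ l)
      = ∑ n ∈ Finset.Icc (l - M) (l + M), Complex.exp (Complex.I * (n : ℂ) * t) • A (n - l) (φ l) := by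
    symm
    apply Finset.sum_subset
    · apply Finset.Icc_subset_Icc <;> omega
    · intro n _ hn
      rw [Finset.mem_Icc] at hn
      rw [hA (n - l) (by rw [lt_abs]; omega)]
      simp
  rw [h1, ContinuousLinearMap.sum_apply]
  refine Finset.sum_bij (fun m _ => m + l) ?_ ?_ ?_ ?_
  · intro m hm
    rw [Finset.mem_Icc] at *
    omega
  · intro a _ b _ h
    simpa using h
  · intro b hb
    rw [Finset.mem_Icc] at hb
    exact ⟨b - l, by rw [Finset.mem_Icc]; omega, by ring⟩
  · intro m _
    rw [ContinuousLinearMap.smul_apply, map_smul, smul_smul, ← Complex.exp_add, add_sub_cancel_right]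
    congr 2
    push_cast
    ring

/-- **Operator-norm bound for block-Toeplitz operators.**
Let `(A_m)_{m ∈ ℤ}` be operators on `E` vanishing for `|m| > M`, and let `𝒯` be the
block-Toeplitz operator `(𝒯Φ)(l) = ∑_{l' = p}^{q} A_{l-l'} Φ(l')` on the `ℓ²` space of
functions `{p, …, q} → E`.  Then `‖𝒯‖ ≤ sup_{θ ∈ [0,2π]} ‖∑_m A_m e^{imθ}‖`. -/
theorem blockToeplitz_norm_le (M : ℕ) (A : ℤ → E →L[ℂ] E)
    (hA : ∀ m : ℤ, (M : ℤ) < |m| → A m = 0)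
    (p q : ℤ) (hpq : p ≤ q) :
    ‖matOp (fun l l' : ↥(Set.Icc p q) => A ((l : ℤ) - (l' : ℤ)))‖ ≤
      ⨆ θ : Set.Icc (0 : ℝ) (2 * Real.pi),
        ‖∑ m ∈ Finset.Icc (-(M : ℤ)) (M : ℤ),
            Complex.exp (Complex.I * (m : ℂ) * ((θ : ℝ) : ℂ)) • A m‖ := by
  set a : ℝ → (E →L[ℂ] E) := fun θ => ∑ m ∈ Finset.Icc (-(M : ℤ)) (M : ℤ),
            Complex.exp (Complex.I * (m : ℂ) * (θ : ℂ)) • A m with ha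
  have hbdd : BddAbove (Set.range fun θ : Set.Icc (0 : ℝ) (2 * Real.pi) => ‖a θ‖) := by
    apply IsCompact.bddAbove
    apply isCompact_range
    simp only [ha]
    fun_prop
  change _ ≤ ⨆ θ : Set.Icc (0 : ℝ) (2 * Real.pi), ‖a θ‖
  set C := ⨆ θ : Set.Icc (0 : ℝ) (2 * Real.pi), ‖a θ‖ with hC
  have hC0 : 0 ≤ C := Real.iSup_nonneg fun _ => norm_nonneg _
  refine ContinuousLinearMap.opNorm_le_bound _ hC0 fun Φ => ?_
  set φ : ℤ → E := fun l => if h : l ∈ Set.Icc p q then Φ ⟨l, h⟩ else 0 with hφ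
  have hφs : ∀ l : Set.Icc p q, φ l = Φ l := fun l => by simp only [hφ]; rw [dif_pos l.2]
  set g : ℤ → E := fun n => ∑ l ∈ Finset.Icc p q, A (n - l) (φ l) with hg
  have hT : ∀ l : Set.Icc p q,
      matOp (fun l l' : ↥(Set.Icc p q) => A ((l : ℤ) - (l' : ℤ))) Φ l = g l := by
    intro l
    rw [matOp_apply_aux]
    simp only [hg]
    rw [Finset.sum_subtype (p := fun x => x ∈ Set.Icc p q) (Finset.Icc p q) (by simp)]
    exact Finset.sum_congr rfl fun j _ => by rw [hφs]
  have hn1 : ‖Φ‖ ^ 2 = ∑ l ∈ Finset.Icc p q, ‖φ l‖ ^ 2 := by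
    rw [PiLp.norm_sq_eq_of_L2,
      Finset.sum_subtype (p := fun x => x ∈ Set.Icc p q) (Finset.Icc p q) (by simp)]
    exact Finset.sum_congr rfl fun j _ => by rw [hφs]
  have hn2 : ‖matOp (fun l l' : ↥(Set.Icc p q) => A ((l : ℤ) - (l' : ℤ))) Φ‖ ^ 2
      = ∑ l ∈ Finset.Icc p q, ‖g l‖ ^ 2 := by
    rw [PiLp.norm_sq_eq_of_L2,
      Finset.sum_subtype (p := fun x => x ∈ Set.Icc p q) (Finset.Icc p q) (by simp)]
    exact Finset.sum_congr rfl fun j _ => by rw [hT]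
  obtain ⟨N, hNdef⟩ : ∃ N : ℕ, (N : ℤ) = q - p + 2 * M + 1 :=
    ⟨(q - p + 2 * M + 1).toNat, by omega⟩
  have hN : 0 < N := by omega
  have hNR : (0 : ℝ) < N := by exact_mod_cast hN
  have P1 := parseval_aux N hN (Finset.Icc p q)
    (by intro m hm n hn; rw [Finset.mem_Icc] at *; rw [abs_lt]; omega) φ
  have P2 := parseval_aux N hN (Finset.Icc (p - M) (q + M))
    (by intro m hm n hn; rw [Finset.mem_Icc] at *; rw [abs_lt]; omega) g
  have hle : ∑ l ∈ Finset.Icc p q, ‖g l‖ ^ 2 ≤ ∑ l ∈ Finset.Icc (p - M) (q + M), ‖g l‖ ^ 2 := by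
    apply Finset.sum_le_sum_of_subset_of_nonneg
    · apply Finset.Icc_subset_Icc <;> omega
    · intros; positivity
  have hmain : (N : ℝ) * ∑ l ∈ Finset.Icc (p - M) (q + M), ‖g l‖ ^ 2
      ≤ C ^ 2 * (N * ∑ l ∈ Finset.Icc p q, ‖φ l‖ ^ 2) := by
    rw [← P1, ← P2, Finset.mul_sum]
    refine Finset.sum_le_sum fun k hk => ?_
    rw [← conv_aux M A hA p q φ, ← mul_pow]
    refine pow_le_pow_left₀ (norm_nonneg _) ?_ 2
    refine (ContinuousLinearMap.le_opNorm _ _).trans ?_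
    refine mul_le_mul_of_nonneg_right ?_ (norm_nonneg _)
    have hk' : (k : ℝ) ≤ N := by exact_mod_cast (Finset.mem_range.1 hk).le
    refine le_ciSup hbdd ⟨2 * Real.pi * k / N, by positivity, ?_⟩
    rw [div_le_iff₀ hNR]
    exact mul_le_mul_of_nonneg_left hk' (by positivity)
  refine (sq_le_sq₀ (norm_nonneg _) (by positivity)).1 ?_
  rw [mul_pow, hn1, hn2]
  refine hle.trans (le_of_mul_le_mul_left ?_ hNR)
  linarith

end
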